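/- Let V be a finite set with distinct s, t ∈ V, and let c_λ : V × V → ℝ, λ ∈ ℝ, be parametric nonnegative capacities such that λ ↦ c_λ(s, v) is nondecreasing for every v, λ ↦ c_λ(v, t) is nonincreasing for every v, and c_λ(u, v) is constant in λ whenever u ≠ s and v ≠ t. Fix λ ∈ ℝ and let S_λ be the unique minimal minimum s,t-cut with respect to capacities c_λ. Then: (1) for every λ' ≥ λ, the minimum of c_{λ'}⁺(S') over all s,t-cuts S' equals the minimum of c_{λ'}⁺(S') over all s,t-cuts S' with S_λ ⊆ S'; (2) for every λ' ≤ λ, the minimum of c_{λ'}⁺(S') over all s,t-cuts S' equals the minimum of c_{λ'}⁺(S') over all s,t-cuts S' with S' ⊆ S_λ. -/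

import Mathlib

/-!
The heart of the proof is a two-parameter submodularity inequality (`cutVal_union_add_inter_le`):
if `chi` dominates `clo` on edges leaving `s`, is dominated by it on edges entering `t`, and agrees
with it elsewhere, then for cuts `A` and `B`
`chi⁺(A ∪ B) + clo⁺(A ∩ B) ≤ chi⁺(A) + clo⁺(B)`.
It holds edge by edge. When `λ' ≥ λ`, taking `A = X` and `B = S_λ`, minimality of `S_λ` at `λ` gives
`c_{λ'}⁺(X ∪ S_λ) ≤ c_{λ'}⁺(X)`, so every cut can be enlarged to contain `S_λ` at no cost. When
`λ' ≤ λ`, taking `A = S_λ` and `B = X` gives `c_{λ'}⁺(X ∩ S_λ) ≤ c_{λ'}⁺(X)` in the same way.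
-/

/-- The cut value of a set `S` for capacities `c`: `c⁺(S) = Σ_{u ∈ S, v ∉ S} c u v`. -/
def cutVal {V : Type*} [Fintype V] [DecidableEq V] (c : V → V → ℝ) (S : Finset V) : ℝ :=
  ∑ u ∈ S, ∑ v ∈ Sᶜ, c u v

/-- `S` is a minimum `s,t`-cut for capacities `c`. -/
def IsMinCut {V : Type*} [Fintype V] [DecidableEq V] (s t : V) (c : V → V → ℝ)
    (S : Finset V) : Prop :=
  s ∈ S ∧ t ∉ S ∧ ∀ S' : Finset V, s ∈ S' → t ∉ S' → cutVal c S ≤ cutVal c S'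

/-- `S` is the minimal minimum `s,t`-cut for capacities `c`: a minimum cut contained in
every minimum cut. -/
def IsMinimalMinCut {V : Type*} [Fintype V] [DecidableEq V] (s t : V) (c : V → V → ℝ)
    (S : Finset V) : Prop :=
  IsMinCut s t c S ∧ ∀ S' : Finset V, IsMinCut s t c S' → S ⊆ S'

lemma cutVal_eq_sum_ite {V : Type*} [Fintype V] [DecidableEq V] (c : V → V → ℝ) (S : Finset V) :
    cutVal c S = ∑ u, ∑ v, if u ∈ S ∧ v ∉ S then c u v else 0 := by
  simp [cutVal, ite_and, Finset.compl_eq_univ_sdiff,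
    Finset.sdiff_eq_filter, Finset.sum_ite]

/-- Submodularity of the cut function across two capacity functions, `chi` at the larger parameter
and `clo` at the smaller one. -/
lemma cutVal_union_add_inter_le {V : Type*} [Fintype V] [DecidableEq V] {s t : V}
    {clo chi : V → V → ℝ} (hlo : ∀ u v, 0 ≤ clo u v) (hhi : ∀ u v, 0 ≤ chi u v)
    (hs : ∀ v, clo s v ≤ chi s v) (ht : ∀ u, chi u t ≤ clo u t)
    (hc : ∀ u v, u ≠ s → v ≠ t → clo u v = chi u v)
    {A B : Finset V} (hsA : s ∈ A) (hsB : s ∈ B) (htA : t ∉ A) (htB : t ∉ B) :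
    cutVal chi (A ∪ B) + cutVal clo (A ∩ B) ≤ cutVal chi A + cutVal clo B := by
  simp only [cutVal_eq_sum_ite, ← Finset.sum_add_distrib]
  refine Finset.sum_le_sum fun u _ => Finset.sum_le_sum fun v _ => ?_
  have h1 := hlo u v
  have h2 := hhi u v
  -- An edge leaving `s` can only cost more under `chi`, one entering `t` only less; membership of
  -- its other endpoint in `A` and `B` then decides the inequality.
  by_cases hu : u = s
  · subst hu
    have h3 := hs v
    by_cases hvA : v ∈ A <;> by_cases hvB : v ∈ B <;> simp [*]
  · by_cases hv : v = t
    · subst hv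
      have h3 := ht u
      by_cases huA : u ∈ A <;> by_cases huB : u ∈ B <;> simp [*]
    · have h3 := hc u v hu hv
      by_cases huA : u ∈ A <;> by_cases huB : u ∈ B <;>
        by_cases hvA : v ∈ A <;> by_cases hvB : v ∈ B <;> simp [*]

/-- If each member of `P` is matched by a member of the subset `Q` of no larger value, then the two
infima agree. -/
lemma sInf_image_eq_of_forall_exists_le {α : Type*} [Finite α] {f : α → ℝ} {P Q : Set α}
    (hQ : Q.Nonempty) (hQP : Q ⊆ P) (h : ∀ x ∈ P, ∃ y ∈ Q, f y ≤ f x) :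
    sInf (f '' P) = sInf (f '' Q) := by
  apply le_antisymm
  · exact csInf_le_csInf (Set.toFinite _).bddBelow (hQ.image f) (Set.image_mono hQP)
  · refine le_csInf ((hQ.mono hQP).image f) ?_
    rintro _ ⟨x, hx, rfl⟩
    obtain ⟨y, hy, hyx⟩ := h x hx
    exact (csInf_le (Set.toFinite _).bddBelow (Set.mem_image_of_mem f hy)).trans hyx

/-- Contraction lemma: let `S_λ` be the minimal minimum `s,t`-cut at parameter `λ`.
Then (1) for `λ' ≥ λ`, the minimum cut capacity at `λ'` over all cuts equals the
minimum over cuts containing `S_λ`, and (2) for `λ' ≤ λ` it equals the minimum over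
cuts contained in `S_λ`. -/
theorem stmt14 {V : Type*} [DecidableEq V] [Fintype V]
    (s t : V) (hst : s ≠ t)
    (c : ℝ → V → V → ℝ)
    (hnn : ∀ (lam : ℝ) (u v : V), 0 ≤ c lam u v)
    (hmono : ∀ v : V, Monotone fun lam => c lam s v)
    (hanti : ∀ v : V, Antitone fun lam => c lam v t)
    (hconst : ∀ u v : V, u ≠ s → v ≠ t → ∀ lam lam' : ℝ, c lam u v = c lam' u v)
    (lam : ℝ) (Slam : Finset V) (hS : IsMinimalMinCut s t (c lam) Slam) :
    (∀ lam' : ℝ, lam ≤ lam' →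
      sInf (cutVal (c lam') '' {S : Finset V | s ∈ S ∧ t ∉ S}) =
        sInf (cutVal (c lam') '' {S : Finset V | s ∈ S ∧ t ∉ S ∧ Slam ⊆ S})) ∧
    (∀ lam' : ℝ, lam' ≤ lam →
      sInf (cutVal (c lam') '' {S : Finset V | s ∈ S ∧ t ∉ S}) =
        sInf (cutVal (c lam') '' {S : Finset V | s ∈ S ∧ t ∉ S ∧ S ⊆ Slam})) := by
  obtain ⟨⟨hsS, htS, hmin⟩, -⟩ := hS
  constructor
  · intro lam' hl
    refine sInf_image_eq_of_forall_exists_le ⟨Slam, hsS, htS, subset_rfl⟩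
      (fun S h => ⟨h.1, h.2.1⟩) ?_
    rintro X ⟨hsX, htX⟩
    refine ⟨X ∪ Slam, ⟨by simp [hsX], by simp [htX, htS], Finset.subset_union_right⟩, ?_⟩
    have h1 := cutVal_union_add_inter_le (hnn lam) (hnn lam') (fun v => hmono v hl)
      (fun u => hanti u hl) (fun u v hu hv => hconst u v hu hv lam lam') hsX hsS htX htS
    have h2 := hmin (X ∩ Slam) (by simp [hsX, hsS]) (by simp [htX])
    linarith
  · intro lam' hl
    refine sInf_image_eq_of_forall_exists_le ⟨Slam, hsS, htS, subset_rfl⟩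
      (fun S h => ⟨h.1, h.2.1⟩) ?_
    rintro X ⟨hsX, htX⟩
    refine ⟨Slam ∩ X, ⟨by simp [hsX, hsS], by simp [htX], Finset.inter_subset_left⟩, ?_⟩
    have h1 := cutVal_union_add_inter_le (hnn lam') (hnn lam) (fun v => hmono v hl)
      (fun u => hanti u hl) (fun u v hu hv => hconst u v hu hv lam' lam) hsS hsX htS htX
    have h2 := hmin (Slam ∪ X) (by simp [hsS]) (by simp [htX, htS])
    linarith
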